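/- arXiv:2508.10438 — 6 statements merged into one kernel-verified Lean document; each statement's English description precedes it below -/
import Mathlib

section
/- Let D be a type, 𝒮 a nonempty finite family of finite subsets of D, and c : D → ℤ a cost function with c(d) ≥ 1 for every d ∈ D. Let C = min_{S ∈ 𝒮} Σ_{d ∈ S} c(d). Fix t ∈ D and define c' : D → ℤ by c'(t) = 2·c(t) − 1 and c'(d) = 2·c(d) for all d ≠ t. Then min_{S ∈ 𝒮} Σ_{d ∈ S} c'(d) = 2·C − 1 if there exists S ∈ 𝒮 with t ∈ S and Σ_{d ∈ S} c(d) = C, and min_{S ∈ 𝒮} Σ_{d ∈ S} c'(d) = 2·C otherwise. -/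
/-!
Scaling all costs by `k` and then discounting `t` by `δ` lowers the scaled cost of exactly the sets
containing `t`, each by `δ`. Costs being integers, a set that is not optimal costs at least `C + 1`,
hence at least `k * C + k` after scaling, so a discount `δ ≤ k` cannot bring it below `k * C`: the
discount shows in the minimum only through a set that was already optimal.
-/

section InfSubIte

variable {ι α : Type*} [SemilatticeInf α] [AddCommGroup α] [IsOrderedAddMonoid α]
  {s : Finset ι} (hs : s.Nonempty) {f : ι → α} {p : ι → Prop} [DecidablePred p] {δ : α}

theorem inf'_sub_ite_of_exists (hδ : 0 ≤ δ) (h : ∃ i ∈ s, p i ∧ f i = s.inf' hs f) :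
    s.inf' hs (fun i => f i - if p i then δ else 0) = s.inf' hs f - δ := by
  obtain ⟨i, hi, hpi, hfi⟩ := h
  refine le_antisymm ?_ (Finset.le_inf' _ _ fun j hj => ?_)
  · calc s.inf' hs (fun i => f i - if p i then δ else 0)
        ≤ f i - if p i then δ else 0 := Finset.inf'_le _ hi
      _ = s.inf' hs f - δ := by rw [if_pos hpi, hfi]
  · have hite : (if p j then δ else 0) ≤ δ := by split_ifs <;> simp [hδ]
    exact sub_le_sub (Finset.inf'_le f hj) hite

theorem inf'_sub_ite_of_forall_add_le (hδ : 0 ≤ δ)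
    (h : ∀ i ∈ s, p i → s.inf' hs f + δ ≤ f i) :
    s.inf' hs (fun i => f i - if p i then δ else 0) = s.inf' hs f := by
  refine le_antisymm (Finset.inf'_mono_fun fun i _ => ?_) (Finset.le_inf' _ _ fun i hi => ?_)
  · exact sub_le_self _ (by split_ifs <;> simp [hδ])
  · split_ifs with hpi
    · exact le_sub_iff_add_le.mpr (h i hi hpi)
    · simpa only [sub_zero] using Finset.inf'_le f hi

end InfSubIte

theorem inf'_mul_left {ι R : Type*} [Mul R] [Zero R] [LinearOrder R] [PosMulMono R]
    {s : Finset ι} (hs : s.Nonempty) (f : ι → R) {k : R} (hk : 0 ≤ k) :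
    s.inf' hs (fun i => k * f i) = k * s.inf' hs f :=
  (map_finset_inf' (OrderHom.mk (k * ·) fun _ _ h => mul_le_mul_of_nonneg_left h hk) hs f).symm

theorem sum_eq_mul_sum_sub_ite {D R : Type*} [DecidableEq D] [NonUnitalNonAssocRing R]
    {c c' : D → R} {t : D} {k δ : R} (hc' : ∀ d, c' d = if d = t then k * c t - δ else k * c d)
    (S : Finset D) :
    ∑ d ∈ S, c' d = k * ∑ d ∈ S, c d - if t ∈ S then δ else 0 := by
  have hc'_sub (d : D) : c' d = k * c d - if d = t then δ else 0 := by
    rw [hc']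
    split_ifs with hd
    · rw [hd]
    · rw [sub_zero]
  simp only [hc'_sub, Finset.sum_sub_distrib, Finset.mul_sum, Finset.sum_ite_eq']

theorem stmt_0_general {D : Type*} [DecidableEq D] {𝒮 : Finset (Finset D)} (h𝒮 : 𝒮.Nonempty)
    {c c' : D → ℤ} {t : D} {k δ : ℤ} (hδ : 0 ≤ δ) (hδk : δ ≤ k)
    (hc' : ∀ d, c' d = if d = t then k * c t - δ else k * c d)
    {C : ℤ} (hC : C = 𝒮.inf' h𝒮 (fun S => ∑ d ∈ S, c d)) :
    ((∃ S ∈ 𝒮, t ∈ S ∧ ∑ d ∈ S, c d = C) →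
        𝒮.inf' h𝒮 (fun S => ∑ d ∈ S, c' d) = k * C - δ) ∧
    ((¬ ∃ S ∈ 𝒮, t ∈ S ∧ ∑ d ∈ S, c d = C) →
        𝒮.inf' h𝒮 (fun S => ∑ d ∈ S, c' d) = k * C) := by
  have hk : 0 ≤ k := hδ.trans hδk
  have hscale : 𝒮.inf' h𝒮 (fun S => k * ∑ d ∈ S, c d) = k * C := by
    rw [inf'_mul_left h𝒮 _ hk, hC]
  simp only [sum_eq_mul_sum_sub_ite hc', ← hscale]
  refine ⟨fun ⟨S, hS, htS, hSC⟩ => ?_, fun hno => ?_⟩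
  · exact inf'_sub_ite_of_exists h𝒮 hδ ⟨S, hS, htS, by rw [hscale, hSC]⟩
  · refine inf'_sub_ite_of_forall_add_le h𝒮 hδ fun S hS htS => ?_
    have hCS : C ≤ ∑ d ∈ S, c d := hC ▸ Finset.inf'_le _ hS
    have hlt : C < ∑ d ∈ S, c d := hCS.lt_of_ne fun h => hno ⟨S, hS, htS, h.symm⟩
    calc 𝒮.inf' h𝒮 (fun S => k * ∑ d ∈ S, c d) + δ
        ≤ k * C + k := by rw [hscale]; gcongr
      _ = k * (C + 1) := by ring
      _ ≤ k * ∑ d ∈ S, c d := mul_le_mul_of_nonneg_left hlt hk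

/-- cost doubling/decrement trick for membership of a change tuple in
some lowest-cost solution. -/
theorem stmt_0 {D : Type*} [DecidableEq D]
    (𝒮 : Finset (Finset D)) (h𝒮 : 𝒮.Nonempty)
    (c : D → ℤ) (hc : ∀ d, 1 ≤ c d) (t : D)
    (c' : D → ℤ) (hc' : ∀ d, c' d = if d = t then 2 * c t - 1 else 2 * c d)
    (C : ℤ) (hC : C = 𝒮.inf' h𝒮 (fun S => ∑ d ∈ S, c d)) :
    ((∃ S ∈ 𝒮, t ∈ S ∧ ∑ d ∈ S, c d = C) →
        𝒮.inf' h𝒮 (fun S => ∑ d ∈ S, c' d) = 2 * C - 1) ∧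
    ((¬ ∃ S ∈ 𝒮, t ∈ S ∧ ∑ d ∈ S, c d = C) →
        𝒮.inf' h𝒮 (fun S => ∑ d ∈ S, c' d) = 2 * C) :=
  stmt_0_general h𝒮 zero_le_one one_le_two hc' hC
end

section
/- Let n ∈ ℕ, D a type, a : Fin n → D an injective map, and c : D → ℤ a cost function with c(a(i)) = 2^{n−1−i} for every i < n and c(d) = 2^n for every d ∈ D not in the range of a. If S and S' are finite subsets of D with Σ_{d∈S} c(d) = Σ_{d∈S'} c(d) ≤ 2^n − 1, then both S and S' are contained in the range of a, and S = S'. -/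
/-! A set of total cost below `b` contains no element of cost at least `b`, so both sets consist of
designated elements. Their costs are distinct powers of the base, hence the total cost is an
expansion with digits `0` and `1` whose digits record which designated elements are present, and
uniqueness of the expansion recovers the set. -/

theorem coe_subset_of_sum_lt {D M : Type*} [AddCommMonoid M] [PartialOrder M]
    [IsOrderedAddMonoid M] {c : D → M} {S : Finset D} {A : Set D} {b : M}
    (hc : ∀ d ∈ S, 0 ≤ c d) (hb : ∀ d ∈ S, d ∉ A → b ≤ c d) (hS : ∑ d ∈ S, c d < b) :
    (S : Set D) ⊆ A := by
  intro d hd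
  by_contra hdA
  exact ((hb d hd hdA).trans (Finset.single_le_sum hc hd)).not_gt hS

theorem sum_pow_injective {ι R : Type*} [Semiring R] [CharZero R] {m : ℕ} (hm : 2 ≤ m)
    {e : ι → ℕ} (he : Function.Injective e) :
    Function.Injective fun T : Finset ι ↦ ∑ i ∈ T, (m : R) ^ e i := by
  classical
  intro T T' h
  have h_nat : ∑ i ∈ T, m ^ e i = ∑ i ∈ T', m ^ e i := by
    dsimp only at h
    exact_mod_cast h
  apply Finset.image_injective he
  apply Finset.geomSum_injective hm
  simpa only [Finset.sum_image he.injOn] using h_nat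

theorem eq_of_sum_eq_of_subset_range {D ι R : Type*} [Semiring R] [CharZero R] {m : ℕ}
    (hm : 2 ≤ m) {a : ι → D} {e : ι → ℕ} (he : Function.Injective e) {c : D → R}
    (hca : ∀ i, c (a i) = (m : R) ^ e i) {S S' : Finset D} (hS : (S : Set D) ⊆ Set.range a)
    (hS' : (S' : Set D) ⊆ Set.range a) (hsum : ∑ d ∈ S, c d = ∑ d ∈ S', c d) : S = S' := by
  classical
  have ha : Function.Injective a := fun i j hij ↦ he <|
    Nat.pow_right_injective hm <| Nat.cast_injective (R := R) <| by
      simpa only [Nat.cast_pow, hca] using congrArg c hij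
  obtain ⟨T, -, rfl⟩ := Finset.subset_set_image_iff.mp (Set.image_univ.symm ▸ hS)
  obtain ⟨T', -, rfl⟩ := Finset.subset_set_image_iff.mp (Set.image_univ.symm ▸ hS')
  simp only [Finset.sum_image ha.injOn, hca] at hsum
  rw [sum_pow_injective hm he hsum]

theorem stmt_2_general {D ι R : Type*} [Semiring R] [PartialOrder R] [IsStrictOrderedRing R]
    {m : ℕ} (hm : 2 ≤ m) {a : ι → D} {e : ι → ℕ} (he : Function.Injective e) {c : D → R}
    (hca : ∀ i, c (a i) = (m : R) ^ e i) {b : R} (hb : 0 ≤ b)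
    (hcd : ∀ d ∉ Set.range a, b ≤ c d) {S S' : Finset D}
    (hsum : ∑ d ∈ S, c d = ∑ d ∈ S', c d) (hbound : ∑ d ∈ S, c d < b) :
    (S : Set D) ⊆ Set.range a ∧ (S' : Set D) ⊆ Set.range a ∧ S = S' := by
  have hc_nonneg (d : D) : 0 ≤ c d := by
    by_cases hd : d ∈ Set.range a
    · obtain ⟨i, rfl⟩ := hd
      exact hca i ▸ pow_nonneg m.cast_nonneg _
    · exact hb.trans (hcd d hd)
  have subset_range {U : Finset D} (hU : ∑ d ∈ U, c d < b) : (U : Set D) ⊆ Set.range a :=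
    coe_subset_of_sum_lt (fun d _ ↦ hc_nonneg d) (fun d _ ↦ hcd d) hU
  have hS := subset_range hbound
  have hS' := subset_range (hsum ▸ hbound)
  exact ⟨hS, hS', eq_of_sum_eq_of_subset_range hm he hca hS hS' hsum⟩

/-- with designated costs 2^{n-1},…,2,1 and all other costs 2^n, any two
subsets of equal total cost at most 2^n − 1 coincide and lie in the designated range. -/
theorem stmt_2 {D : Type*} [DecidableEq D] (n : ℕ) (a : Fin n → D)
    (ha : Function.Injective a) (c : D → ℤ)
    (hca : ∀ i : Fin n, c (a i) = 2 ^ (n - 1 - (i : ℕ)))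
    (hcd : ∀ d : D, d ∉ Set.range a → c d = 2 ^ n)
    (S S' : Finset D)
    (hsum : ∑ d ∈ S, c d = ∑ d ∈ S', c d)
    (hbound : ∑ d ∈ S, c d ≤ 2 ^ n - 1) :
    (↑S : Set D) ⊆ Set.range a ∧ (↑S' : Set D) ⊆ Set.range a ∧ S = S' := by
  have exponent_injective : Function.Injective fun i : Fin n ↦ n - 1 - (i : ℕ) := by
    intro i j h
    grind
  exact stmt_2_general le_rfl exponent_injective hca (by positivity) (fun d hd ↦ (hcd d hd).ge)
    hsum (Int.lt_of_le_sub_one hbound)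
end

section
/- Let a transition system with valuation be given, and let φ be a formula with deg(φ) ≤ n ≤ m. Then every n-max valid sequence satisfies φ if and only if every m-max valid sequence satisfies φ. -/
/-- Formulas of a finite-trace temporal logic over a type `α` of atoms. -/
inductive Formula (α : Type*) : Type _ where
  | atom : α → Formula α
  | and : Formula α → Formula α → Formula α
  | neg : Formula α → Formula α
  | next : Formula α → Formula α

namespace Formula

/-- Disjunction `φ₁ ∨ φ₂` abbreviates `¬(¬φ₁ ∧ ¬φ₂)`. -/
def or {α : Type*} (f g : Formula α) : Formula α := neg (and (neg f) (neg g))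

/-- The degree of a formula: maximal nesting depth of the weak-next operator. -/
def deg {α : Type*} : Formula α → ℕ
  | atom _ => 0
  | and f g => max f.deg g.deg
  | neg f => f.deg
  | next f => f.deg + 1

end Formula

/-- Satisfaction of a formula on the nonempty finite sequence `(σ i, …, σ m)`:
`Sat v σ m φ i` means `φ` holds on `(σ i, …, σ m)`. -/
def Sat {S α : Type*} (v : S → α → Prop) (σ : ℕ → S) (m : ℕ) : Formula α → ℕ → Prop
  | .atom a, i => v (σ i) a
  | .and f g, i => Sat v σ m f i ∧ Sat v σ m g i
  | .neg f, i => ¬ Sat v σ m f i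
  | .next f, i => i = m ∨ (i < m ∧ Sat v σ m f (i + 1))

/-- `nest(φ, ∨, n)`. -/
def nestOr {α : Type*} (φ : Formula α) : ℕ → Formula α
  | 0 => φ
  | n + 1 => φ.or (Formula.next (nestOr φ n))

/-- `nest(φ, ∧, n)`. -/
def nestAnd {α : Type*} (φ : Formula α) : ℕ → Formula α
  | 0 => φ
  | n + 1 => Formula.and φ (Formula.next (nestAnd φ n))

/-- A transition system: states, step relation, terminal states, initial state. -/
structure TransSys (S : Type*) where
  R : S → S → Prop
  T : Set S
  init : S

/-- The set of blocked states: states with no successor. -/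
def TransSys.B {S : Type*} (ts : TransSys S) : Set S := {s | ∀ s', ¬ ts.R s s'}

/-- `(σ 0, …, σ m)` is a valid sequence. -/
def TransSys.Valid {S : Type*} (ts : TransSys S) (σ : ℕ → S) (m : ℕ) : Prop :=
  σ 0 = ts.init ∧ (∀ i < m, ts.R (σ i) (σ (i + 1))) ∧ (∀ i < m, σ i ∉ ts.T)

/-- `(σ 0, …, σ m)` is an `n`-max valid sequence. -/
def TransSys.NMax {S : Type*} (ts : TransSys S) (n : ℕ) (σ : ℕ → S) (m : ℕ) : Prop :=
  ts.Valid σ m ∧ (m = n ∨ (m < n ∧ σ m ∈ ts.T ∪ ts.B))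

/-- The system globally satisfies `φ`: every `deg(φ)`-max valid sequence satisfies `φ`. -/
def GlobSat {S α : Type*} (ts : TransSys S) (v : S → α → Prop) (φ : Formula α) : Prop :=
  ∀ σ m, ts.NMax φ.deg σ m → Sat v σ m φ 0

/-!
Satisfaction of `φ` by a sequence depends only on its truncation at position `deg φ`. For `n ≤ m`,
the `n`-max valid sequences are exactly the truncations at position `n` of the `m`-max ones:
truncating preserves maximality, and conversely an `n`-max sequence is prolonged one step at a time
until it reaches position `m` or a state of `T ∪ B`.
So for every `n ≥ deg φ` the condition on `n`-max sequences amounts to that on `deg φ`-max ones.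
-/

/-- `hkl` and `hστ` say that `(σ 0, …, σ k)` and `(τ 0, …, τ l)` have the same truncation at
position `n`. -/
theorem sat_iff_of_eq_upto {S α : Type*} {v : S → α → Prop} {σ τ : ℕ → S} {k l n : ℕ}
    (hkl : min k n = min l n) (hστ : ∀ j ≤ min k n, σ j = τ j) {φ : Formula α} {i : ℕ}
    (hik : i ≤ k) (hin : i + φ.deg ≤ n) : Sat v σ k φ i ↔ Sat v τ l φ i := by
  induction φ generalizing i with
  | atom a =>
    simp only [Sat, hστ i (le_min hik (le_of_add_le_left hin))]
  | and f g ihf ihg =>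
    simp only [Formula.deg] at hin
    simp only [Sat, ihf hik (by omega), ihg hik (by omega)]
  | neg f ih => exact not_congr (ih hik hin)
  | next f ih =>
    simp only [Formula.deg] at hin
    have hend : i = k ↔ i = l := by omega
    have hlt : i < k ↔ i < l := by omega
    have hnext (h : i < k) : Sat v σ k f (i + 1) ↔ Sat v τ l f (i + 1) := ih h (by omega)
    exact or_congr hend ((and_congr_right hnext).trans (and_congr_left' hlt))

namespace TransSys

variable {S : Type*} {ts : TransSys S} {σ : ℕ → S} {k l m n : ℕ}

theorem Valid.of_le (h : ts.Valid σ l) (hkl : k ≤ l) : ts.Valid σ k :=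
  ⟨h.1, fun i hi => h.2.1 i (hi.trans_le hkl), fun i hi => h.2.2 i (hi.trans_le hkl)⟩

theorem Valid.update_succ {s : S} (h : ts.Valid σ k) (hT : σ k ∉ ts.T) (hs : ts.R (σ k) s) :
    ts.Valid (Function.update σ (k + 1) s) (k + 1) := by
  obtain ⟨hinit, hR, hnT⟩ := h
  have hold : ∀ i ≤ k, Function.update σ (k + 1) s i = σ i := fun i hi =>
    Function.update_of_ne (by omega) _ _
  refine ⟨(hold 0 k.zero_le).trans hinit, fun i hi => ?_, fun i hi => ?_⟩
  · rw [hold i (Nat.le_of_lt_succ hi)]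
    obtain hlt | rfl := Nat.lt_succ_iff_lt_or_eq.mp hi
    · rw [hold (i + 1) hlt]
      exact hR i hlt
    · rwa [Function.update_self]
  · rw [hold i (Nat.le_of_lt_succ hi)]
    obtain hlt | rfl := Nat.lt_succ_iff_lt_or_eq.mp hi
    · exact hnT i hlt
    · exact hT

theorem NMax.le (h : ts.NMax n σ k) : k ≤ n :=
  h.2.elim le_of_eq fun hlt => hlt.1.le

theorem NMax.truncate (h : ts.NMax m σ l) (hnm : n ≤ m) : ts.NMax n σ (min l n) := by
  refine ⟨h.1.of_le (min_le_left l n), ?_⟩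
  obtain hnl | hln := le_or_gt n l
  · exact .inl (min_eq_right hnl)
  · have hend : σ l ∈ ts.T ∪ ts.B := (h.2.resolve_left (by omega)).2
    rw [min_eq_left hln.le]
    exact .inr ⟨hln, hend⟩

theorem NMax.exists_extension_succ (h : ts.NMax n σ k) :
    ∃ τ l, ts.NMax (n + 1) τ l ∧ min l n = k ∧ ∀ j ≤ k, τ j = σ j := by
  by_cases hend : σ k ∈ ts.T ∪ ts.B
  · exact ⟨σ, k, ⟨h.1, .inr ⟨Nat.lt_succ_of_le h.le, hend⟩⟩, min_eq_left h.le, fun _ _ => rfl⟩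
  · obtain rfl : k = n := h.2.resolve_right fun hlt => hend hlt.2
    obtain ⟨hT, hB⟩ : σ k ∉ ts.T ∧ σ k ∉ ts.B := not_or.mp hend
    obtain ⟨s, hs⟩ : ∃ s, ts.R (σ k) s := not_forall_not.mp hB
    exact ⟨Function.update σ (k + 1) s, k + 1, ⟨h.1.update_succ hT hs, .inl rfl⟩,
      min_eq_right k.le_succ, fun j hj => Function.update_of_ne (by omega) _ _⟩

theorem NMax.exists_extension (h : ts.NMax n σ k) (hnm : n ≤ m) :
    ∃ τ l, ts.NMax m τ l ∧ min l n = k ∧ ∀ j ≤ k, τ j = σ j := by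
  induction m, hnm using Nat.le_induction with
  | base =>
    exact ⟨σ, k, h, min_eq_left h.le, fun _ _ => rfl⟩
  | succ m hnm ih =>
    obtain ⟨τ, l, hτ, hlk, hτσ⟩ := ih
    obtain ⟨τ', l', hτ', hl', hτ'τ⟩ := hτ.exists_extension_succ
    refine ⟨τ', l', hτ', by omega, fun j hj => ?_⟩
    exact (hτ'τ j (by omega)).trans (hτσ j hj)

end TransSys

theorem forall_nMax_sat_iff_globSat {S α : Type*} {ts : TransSys S} {v : S → α → Prop}
    {φ : Formula α} {n : ℕ} (hn : φ.deg ≤ n) :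
    (∀ (σ : ℕ → S) (k : ℕ), ts.NMax n σ k → Sat v σ k φ 0) ↔ GlobSat ts v φ := by
  constructor
  · intro hsat σ k hσ
    obtain ⟨τ, l, hτ, rfl, hτσ⟩ := hσ.exists_extension hn
    exact (sat_iff_of_eq_upto (by simp) hτσ l.zero_le (zero_add _).le).mp (hsat τ l hτ)
  · intro hglob σ k hσ
    have htrunc : Sat v σ (min k φ.deg) φ 0 := hglob σ _ (hσ.truncate hn)
    exact (sat_iff_of_eq_upto (by simp) (fun _ _ => rfl) (Nat.zero_le _) (zero_add _).le).mp htrunc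

/-- for deg(φ) ≤ n ≤ m, all n-max valid sequences satisfy φ iff all m-max
valid sequences satisfy φ. -/
theorem stmt_5 {S α : Type*} (ts : TransSys S) (v : S → α → Prop) (φ : Formula α)
    (n m : ℕ) (h1 : φ.deg ≤ n) (h2 : n ≤ m) :
    (∀ (σ : ℕ → S) (k : ℕ), ts.NMax n σ k → Sat v σ k φ 0) ↔
    (∀ (σ : ℕ → S) (k : ℕ), ts.NMax m σ k → Sat v σ k φ 0) :=
  (forall_nMax_sat_iff_globSat h1).trans (forall_nMax_sat_iff_globSat (h1.trans h2)).symm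
end

section
/- Let φ be a formula, n ∈ ℕ, and (S_0, …, S_m) a nonempty finite sequence of states with m ≤ n. Then nest(φ, ∨, n) holds on (S_0, …, S_m) if and only if m < n, or there exists i ≤ m such that φ holds on the suffix (S_i, …, S_m). -/
section

variable {S α : Type*} {v : S → α → Prop} {σ : ℕ → S} {m i : ℕ} {f g : Formula α}

theorem sat_or_iff : Sat v σ m (f.or g) i ↔ Sat v σ m f i ∨ Sat v σ m g i := by
  simp only [Formula.or, Sat, or_iff_not_and_not]

theorem sat_next_last : Sat v σ m f.next m :=
  Or.inl rfl

theorem sat_next_iff_of_lt (h : i < m) : Sat v σ m f.next i ↔ Sat v σ m f (i + 1) := by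
  simp only [Sat, h.ne, h, false_or, true_and]

end

/-- If `m < k + n`, the unfolding reaches the last position, where weak next holds vacuously;
otherwise every position `k + j` with `j ≤ n` lies on the trace. -/
theorem stmt_7_general {S α : Type*} (v : S → α → Prop) (φ : Formula α) (n : ℕ)
    (σ : ℕ → S) {k m : ℕ} (hk : k ≤ m) :
    Sat v σ m (nestOr φ n) k ↔ m < k + n ∨ ∃ j ≤ n, Sat v σ m φ (k + j) := by
  induction n generalizing k with
  | zero => simp [nestOr, hk.not_gt]
  | succ n ih =>
    rw [nestOr, sat_or_iff]
    rcases hk.eq_or_lt with rfl | hlt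
    · simp [sat_next_last]
    · have exists_le_succ_iff : (∃ j ≤ n + 1, Sat v σ m φ (k + j)) ↔
          Sat v σ m φ k ∨ ∃ j ≤ n, Sat v σ m φ (k + 1 + j) := by
        simp only [← Nat.lt_add_one_iff]
        rw [Nat.exists_lt_succ_left]
        simp only [add_zero, add_assoc, add_comm 1]
      rw [sat_next_iff_of_lt hlt, ih hlt, exists_le_succ_iff, add_right_comm k 1 n, add_assoc,
        or_left_comm]

/-- for m ≤ n, nest(φ, ∨, n) holds on (S_0, …, S_m) iff m < n or φ holds
on some suffix (S_i, …, S_m). -/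
theorem stmt_7 {S α : Type*} (v : S → α → Prop) (φ : Formula α) (n : ℕ)
    (σ : ℕ → S) (m : ℕ) (hm : m ≤ n) :
    Sat v σ m (nestOr φ n) 0 ↔ (m < n ∨ ∃ i ≤ m, Sat v σ m φ i) := by
  rcases hm.eq_or_lt with rfl | hlt
  · simpa using stmt_7_general v φ m σ (Nat.zero_le m)
  · simp [stmt_7_general v φ n σ (Nat.zero_le m), hlt]
end

section
/- Let φ be a formula, n ∈ ℕ, and (S_0, …, S_m) a nonempty finite sequence of states with m ≤ n. Then nest(φ, ∧, n) holds on (S_0, …, S_m) if and only if for every i ≤ m, φ holds on the suffix (S_i, …, S_m). -/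
namespace Formula

variable {S α : Type*} {v : S → α → Prop} {σ : ℕ → S} {m i : ℕ}

theorem sat_next_iff {φ : Formula α} (hi : i ≤ m) :
    Sat v σ m φ.next i ↔ (i < m → Sat v σ m φ (i + 1)) := by
  rcases hi.eq_or_lt with rfl | hlt
  · simp [Sat]
  · simp [Sat, hlt, hlt.ne]

theorem sat_nestAnd_succ_iff {φ : Formula α} {n : ℕ} (hi : i ≤ m) :
    Sat v σ m (nestAnd φ (n + 1)) i ↔
      Sat v σ m φ i ∧ (i < m → Sat v σ m (nestAnd φ n) (i + 1)) :=
  and_congr_right fun _ => sat_next_iff hi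

theorem sat_nestAnd_iff {φ : Formula α} {n : ℕ} (hi : i ≤ m) :
    Sat v σ m (nestAnd φ n) i ↔ ∀ j ≤ n, i + j ≤ m → Sat v σ m φ (i + j) := by
  induction n generalizing i with
  | zero => simp [nestAnd, hi]
  | succ n ih =>
    calc Sat v σ m (nestAnd φ (n + 1)) i
      _ ↔ Sat v σ m φ i ∧ (i < m → Sat v σ m (nestAnd φ n) (i + 1)) := sat_nestAnd_succ_iff hi
      _ ↔ Sat v σ m φ i ∧ (i < m → ∀ j ≤ n, i + 1 + j ≤ m → Sat v σ m φ (i + 1 + j)) :=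
        and_congr_right fun _ => forall_congr' fun hlt => ih hlt
      _ ↔ ∀ j ≤ n + 1, i + j ≤ m → Sat v σ m φ (i + j) := by
        constructor
        · rintro ⟨hhead, htail⟩ (_ | j) hj hjm
          · exact hhead
          · rw [← Nat.add_assoc, Nat.add_right_comm] at hjm ⊢
            exact htail (by lia) j (Nat.le_of_succ_le_succ hj) hjm
        · refine fun h => ⟨h 0 (Nat.zero_le _) hi, fun _ j hj hjm => ?_⟩
          rw [Nat.add_right_comm] at hjm ⊢
          exact h (j + 1) (Nat.succ_le_succ hj) hjm

end Formula

/-- for m ≤ n, nest(φ, ∧, n) holds on (S_0, …, S_m) iff φ holds on every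
suffix (S_i, …, S_m). -/
theorem stmt_8 {S α : Type*} (v : S → α → Prop) (φ : Formula α) (n : ℕ)
    (σ : ℕ → S) (m : ℕ) (hm : m ≤ n) :
    Sat v σ m (nestAnd φ n) 0 ↔ ∀ i ≤ m, Sat v σ m φ i := by
  rw [Formula.sat_nestAnd_iff (Nat.zero_le m)]
  simp only [Nat.zero_add]
  exact ⟨fun h i hi => h i (hi.trans hm) hi, fun h i _ hi => h i hi⟩
end

section
/- Let D be a finite type with N elements enumerated d_1, …, d_N, let 𝒮 be a nonempty family of subsets of D, and let c : D → ℤ satisfy c(d) ≥ 1 for all d ∈ D. Define c' : D → ℤ by c'(d_j) = 2^N · c(d_j) − 2^{N−j} for each 1 ≤ j ≤ N. Then there is a unique S* ∈ 𝒮 minimizing Σ_{d∈S} c'(d) over S ∈ 𝒮, and this S* also minimizes Σ_{d∈S} c(d) over S ∈ 𝒮. -/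
/-!
The perturbed cost of `S` is `2 ^ N * ∑ x ∈ S, c x` minus a number whose binary digits are the
indicator of `S`. That number is less than `2 ^ N`, so integer costs are compared first and the
perturbation only breaks ties; since binary digits determine `S`, no tie survives.
-/

section ScaledPerturbation

variable {α : Type*} {s : Set α} {f : α → ℤ} {g : α → ℕ} {M : ℕ}

theorem le_of_mul_sub_le_mul_sub {p q : ℤ} {u v : ℕ} (hu : u < M)
    (h : M * p - u ≤ M * q - v) : p ≤ q := by
  have hlt : (M : ℤ) * p < M * (q + 1) := by linarith
  exact Int.lt_add_one_iff.mp (lt_of_mul_lt_mul_left hlt (Int.natCast_nonneg M))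

theorem isMinOn_of_isMinOn_mul_sub {a : α} (ha : g a < M)
    (hmin : IsMinOn (fun x ↦ M * f x - g x) s a) : IsMinOn f s a :=
  fun _ hb ↦ le_of_mul_sub_le_mul_sub ha (hmin hb)

theorem injOn_mul_sub (hg : s.InjOn g) (hlt : ∀ a ∈ s, g a < M) :
    s.InjOn fun x ↦ M * f x - g x := by
  intro a ha b hb hab
  have hf : f a = f b := le_antisymm
    (le_of_mul_sub_le_mul_sub (hlt a ha) hab.le)
    (le_of_mul_sub_le_mul_sub (hlt b hb) hab.ge)
  simp only [hf, sub_right_inj, Nat.cast_inj] at hab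
  exact hg ha hb hab

end ScaledPerturbation

theorem sum_eq_mul_sum_sub_sum {ι : Type*} {S : Finset ι} {c c' : ι → ℤ} {w : ι → ℕ} {M : ℕ}
    (h : ∀ x ∈ S, c' x = M * c x - w x) :
    ∑ x ∈ S, c' x = M * ∑ x ∈ S, c x - (∑ x ∈ S, w x : ℕ) := by
  rw [Finset.sum_congr rfl h, Finset.sum_sub_distrib, Finset.mul_sum, Nat.cast_sum]

section PowerSums

variable {ι : Type*} {e : ι → ℕ} {m : ℕ}

theorem sum_pow_lt_pow_of_injOn {S : Finset ι} {N : ℕ} (hm : 2 ≤ m) (he : Set.InjOn e S)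
    (hlt : ∀ x ∈ S, e x < N) : ∑ x ∈ S, m ^ e x < m ^ N := by
  rw [← Finset.sum_image (f := (m ^ ·)) he]
  exact Nat.geomSum_lt hm (Finset.forall_mem_image.mpr hlt)

theorem injOn_sum_pow {A : Set ι} (hm : 2 ≤ m) (he : A.InjOn e) :
    Set.InjOn (fun S : Finset ι ↦ ∑ x ∈ S, m ^ e x) {S | ↑S ⊆ A} := by
  intro S hS T hT hST
  have himage : S.image e = T.image e := Finset.geomSum_injective hm <| by
    simpa only [Finset.sum_image (he.mono hS), Finset.sum_image (he.mono hT)] using hST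
  exact mod_cast (he.image_eq_image_iff hS hT).mp (mod_cast himage)

end PowerSums

section PowerPerturbation

variable {ι : Type*} {A : Set ι} {c c' : ι → ℤ} {e : ι → ℕ} {m N : ℕ}

theorem isMinOn_sum_of_isMinOn_sum_perturbed {𝒮 : Set (Finset ι)} {S : Finset ι} (hm : 2 ≤ m)
    (he : A.InjOn e) (hlt : ∀ x ∈ A, e x < N)
    (hc' : ∀ x ∈ A, c' x = (m ^ N : ℕ) * c x - (m ^ e x : ℕ)) (h𝒮 : ∀ T ∈ 𝒮, ↑T ⊆ A)
    (hS : S ∈ 𝒮) (hmin : IsMinOn (fun T ↦ ∑ x ∈ T, c' x) 𝒮 S) :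
    IsMinOn (fun T ↦ ∑ x ∈ T, c x) 𝒮 S := by
  have hsum : Set.EqOn (fun T ↦ ∑ x ∈ T, c' x)
      (fun T ↦ (m ^ N : ℕ) * ∑ x ∈ T, c x - (∑ x ∈ T, m ^ e x : ℕ)) 𝒮 :=
    fun T hT ↦ sum_eq_mul_sum_sub_sum fun x hx ↦ hc' x (h𝒮 T hT hx)
  have hdigits : ∑ x ∈ S, m ^ e x < m ^ N :=
    sum_pow_lt_pow_of_injOn hm (he.mono (h𝒮 S hS)) fun x hx ↦ hlt x (h𝒮 S hS hx)
  exact isMinOn_of_isMinOn_mul_sub hdigits (hmin.congr hsum (hsum hS))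

theorem injOn_sum_perturbed (hm : 2 ≤ m) (he : A.InjOn e) (hlt : ∀ x ∈ A, e x < N)
    (hc' : ∀ x ∈ A, c' x = (m ^ N : ℕ) * c x - (m ^ e x : ℕ)) :
    Set.InjOn (fun S : Finset ι ↦ ∑ x ∈ S, c' x) {S | ↑S ⊆ A} := by
  have hdigits : ∀ S : Finset ι, ↑S ⊆ A → ∑ x ∈ S, m ^ e x < m ^ N := fun S hS ↦
    sum_pow_lt_pow_of_injOn hm (he.mono hS) fun x hx ↦ hlt x (hS hx)
  exact (injOn_mul_sub (injOn_sum_pow hm he) hdigits).congr fun S hS ↦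
    (sum_eq_mul_sum_sub_sum fun x hx ↦ hc' x (hS hx)).symm

end PowerPerturbation

theorem stmt_13_general {D : Type*} {N : ℕ} {d : Fin N → D} (hd : Function.Injective d)
    {𝒮 : Finset (Finset D)} (h𝒮 : 𝒮.Nonempty) (hrange : ∀ S ∈ 𝒮, (S : Set D) ⊆ Set.range d)
    {c c' : D → ℤ} (hc' : ∀ j : Fin N, c' (d j) = 2 ^ N * c (d j) - 2 ^ (N - 1 - (j : ℕ))) :
    ∃ S ∈ 𝒮,
      (∀ S' ∈ 𝒮, ∑ x ∈ S, c' x ≤ ∑ x ∈ S', c' x) ∧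
      (∀ S' ∈ 𝒮, (∀ S'' ∈ 𝒮, ∑ x ∈ S', c' x ≤ ∑ x ∈ S'', c' x) → S' = S) ∧
      (∀ S' ∈ 𝒮, ∑ x ∈ S, c x ≤ ∑ x ∈ S', c x) := by
  let e : D → ℕ := Function.extend d (fun j ↦ N - 1 - (j : ℕ)) 0
  have hed : ∀ j, e (d j) = N - 1 - j := hd.extend_apply _ _
  have he : (Set.range d).InjOn e := Function.Injective.injOn_range fun i j hij ↦ by
    simp only [Function.comp_apply, hed] at hij
    lia
  have helt : ∀ x ∈ Set.range d, e x < N := Set.forall_mem_range.mpr fun j ↦ by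
    rw [hed]
    lia
  have hce : ∀ x ∈ Set.range d, c' x = (2 ^ N : ℕ) * c x - (2 ^ e x : ℕ) :=
    Set.forall_mem_range.mpr fun j ↦ by
      rw [hc', hed]
      norm_cast
  have hinj : Set.InjOn (fun S ↦ ∑ x ∈ S, c' x) 𝒮 :=
    (injOn_sum_perturbed le_rfl he helt hce).mono hrange
  obtain ⟨S, hS, hmin⟩ := 𝒮.exists_min_image (fun S ↦ ∑ x ∈ S, c' x) h𝒮
  refine ⟨S, hS, hmin, fun T hT hTmin ↦ hinj hT hS ((hTmin S hS).antisymm (hmin T hT)), ?_⟩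
  exact isMinOn_sum_of_isMinOn_sum_perturbed le_rfl he helt hce hrange hS hmin

/-- the isolation perturbation c'(d_j) = 2^N·c(d_j) − 2^{N−j} yields a
unique minimizer, which also minimizes the original cost c. -/
theorem stmt_13 {D : Type*} [Fintype D] [DecidableEq D] (N : ℕ)
    (d : Fin N → D) (hd : Function.Bijective d)
    (𝒮 : Finset (Finset D)) (h𝒮 : 𝒮.Nonempty)
    (c : D → ℤ) (hc : ∀ x, 1 ≤ c x)
    (c' : D → ℤ)
    (hc' : ∀ j : Fin N, c' (d j) = 2 ^ N * c (d j) - 2 ^ (N - 1 - (j : ℕ))) :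
    ∃ S ∈ 𝒮,
      (∀ S' ∈ 𝒮, ∑ x ∈ S, c' x ≤ ∑ x ∈ S', c' x) ∧
      (∀ S' ∈ 𝒮, (∀ S'' ∈ 𝒮, ∑ x ∈ S', c' x ≤ ∑ x ∈ S'', c' x) → S' = S) ∧
      (∀ S' ∈ 𝒮, ∑ x ∈ S, c x ≤ ∑ x ∈ S', c x) := by
  exact stmt_13_general hd.injective h𝒮 (fun _ _ x _ ↦ hd.surjective x) hc'
end
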